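/- There is a universal constant C > 0 such that for every ε with |ε| ≤ r/2, the expected off-center score of an r-smoothed density satisfies | E_{x~f_r}[s_r(x+ε)] + ε·I_r | ≤ C·√(I_r)·ε²/r². -/

import Mathlib

/-!
Write `g` for the Gaussian density, `p = f ⋆ g` for the smoothed density, and let
`k z = g (z - ε) - g z + ε g' z`, the second-order Taylor remainder of a translate of `g`. Since
`p' = f ⋆ g'`, the remainder `N x = p (x - ε) - p x + ε p' x` equals `f ⋆ k`. As `∫ p' = 0` and
`s_r p = p'`, a translation of the integration variable gives
`E[s_r (x + ε)] + ε I_r = ∫ s_r N = ∫ p s_r (N / p)`, which Cauchy-Schwarz (`weighted_cs`) bounds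
by `√I_r · √(∫ N² / p)`.

The functional `(K, p) ↦ ∫ K² / p` does not increase under convolution with a probability density
(`conv_sq_div`: pointwise Cauchy-Schwarz in `y`, then Fubini), so `∫ N² / p ≤ ∫ k² / g`. The
latter is a Gaussian integral equal to `exp u - 1 - u` with `u = ε² / r²` (`remainder_sq_div`),
and this is at most `u²` for `u ≤ 1`. Hence the bound holds with `C = 1`. The same contraction
applied to `g'` gives the integrability of `s_r² p`.
-/

open MeasureTheory Real

noncomputable section

/-- The Gaussian density with mean 0 and variance `r ^ 2`. -/
def gaussPdf (r x : ℝ) : ℝ :=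
  Real.exp (-(x ^ 2) / (2 * r ^ 2)) / Real.sqrt (2 * Real.pi * r ^ 2)

/-- The `r`-smoothed density `f_r`, i.e. the density of `Y + Z` where `Y ~ f` and
`Z ~ N(0, r²)` independent. -/
def smoothed (f : ℝ → ℝ) (r x : ℝ) : ℝ := ∫ y, f y * gaussPdf r (x - y)

/-- The score function `s_r = f_r' / f_r` of the smoothed density. -/
def score (f : ℝ → ℝ) (r x : ℝ) : ℝ :=
  deriv (fun t => smoothed f r t) x / smoothed f r x

/-- The Fisher information `I_r = E_{x ~ f_r}[s_r(x)²]` of the smoothed density. -/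
def fisherInfo (f : ℝ → ℝ) (r : ℝ) : ℝ := ∫ x, score f r x ^ 2 * smoothed f r x

/-- `f` is a probability density on `ℝ`. -/
def IsDensity (f : ℝ → ℝ) : Prop :=
  (∀ x, 0 ≤ f x) ∧ MeasureTheory.Integrable f ∧ (∫ x, f x) = 1

/-- Cauchy-Schwarz with a nonnegative weight, including integrability of the product. -/
lemma weighted_cs {w a b : ℝ → ℝ} (hw : ∀ x, 0 ≤ w x)
    (ha : Integrable fun x => w x * a x ^ 2) (hb : Integrable fun x => w x * b x ^ 2)
    (hm : AEStronglyMeasurable (fun x => w x * (a x * b x)) volume) :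
    Integrable (fun x => w x * (a x * b x)) ∧
    (∫ x, w x * (a x * b x)) ^ 2 ≤ (∫ x, w x * a x ^ 2) * ∫ x, w x * b x ^ 2 := by
  have hab : Integrable (fun x => w x * (a x * b x)) := by
    refine (ha.add hb).mono' hm (Filter.Eventually.of_forall fun x => ?_)
    rw [Real.norm_eq_abs, abs_mul, abs_of_nonneg (hw x)]
    have : |a x * b x| ≤ a x ^ 2 + b x ^ 2 := by
      rw [abs_le]
      constructor <;> nlinarith [sq_nonneg (a x + b x), sq_nonneg (a x - b x)]
    simp only [Pi.add_apply]
    nlinarith [mul_le_mul_of_nonneg_left this (hw x)]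
  refine ⟨hab, ?_⟩
  have h : ∀ t : ℝ, 0 ≤ (∫ x, w x * a x ^ 2) * (t * t) + (2 * ∫ x, w x * (a x * b x)) * t
      + ∫ x, w x * b x ^ 2 := by
    intro t
    have h0 : 0 ≤ ∫ x, w x * (t * a x + b x) ^ 2 :=
      integral_nonneg fun x => mul_nonneg (hw x) (sq_nonneg _)
    have h1 : ∫ x, w x * (t * a x + b x) ^ 2
        = ∫ x, (t * t * (w x * a x ^ 2) + 2 * t * (w x * (a x * b x)) + w x * b x ^ 2) := by
      congr 1; ext x; ring
    have i1 : Integrable (fun x => t * t * (w x * a x ^ 2)) := ha.const_mul _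
    have i2 : Integrable (fun x => 2 * t * (w x * (a x * b x))) := hab.const_mul _
    have i3 := i1.add i2
    simp only [Pi.add_def] at i3
    rw [h1, integral_add i3 hb, integral_add i1 i2, integral_const_mul,
      integral_const_mul] at h0
    linarith
  have := discrim_le_zero h
  rw [discrim] at this
  nlinarith

lemma gaussPdf_pos {r : ℝ} (hr : 0 < r) (x : ℝ) : 0 < gaussPdf r x := by
  unfold gaussPdf
  positivity

lemma continuous_gaussPdf (r : ℝ) : Continuous (gaussPdf r) := by
  unfold gaussPdf
  fun_prop

lemma gaussPdf_eq {r : ℝ} (x : ℝ) :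
    gaussPdf r x = ProbabilityTheory.gaussianPDFReal 0 (r ^ 2).toNNReal x := by
  rw [ProbabilityTheory.gaussianPDFReal_def]
  simp only [gaussPdf, sub_zero, Real.coe_toNNReal _ (sq_nonneg r)]
  rw [div_eq_inv_mul]

lemma integrable_pow_mul_gaussPdf {r : ℝ} (hr : 0 < r) (n : ℕ) :
    Integrable fun x => x ^ n * gaussPdf r x := by
  have h := integrable_rpow_mul_exp_neg_mul_sq (b := 1 / (2 * r ^ 2)) (by positivity) (s := n)
    (by have : (0 : ℝ) ≤ n := n.cast_nonneg
        linarith)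
  refine (h.div_const (Real.sqrt (2 * Real.pi * r ^ 2))).congr
    (Filter.Eventually.of_forall fun x => ?_)
  simp only [gaussPdf, Real.rpow_natCast]
  rw [mul_div_assoc]
  congr 3
  ring

lemma integrable_gaussPdf {r : ℝ} (hr : 0 < r) : Integrable (gaussPdf r) := by
  simpa using integrable_pow_mul_gaussPdf hr 0

lemma integral_mul_gaussPdf {r : ℝ} (hr : 0 < r) (F : ℝ → ℝ) :
    ∫ x, F x * gaussPdf r x
      = ∫ x, F x ∂ProbabilityTheory.gaussianReal 0 (r ^ 2).toNNReal := by
  rw [ProbabilityTheory.integral_gaussianReal_eq_integral_smul]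
  · congr 1; ext x; rw [gaussPdf_eq, smul_eq_mul, mul_comm]
  · intro h
    rw [Real.toNNReal_eq_zero] at h
    exact (pow_pos hr 2).not_ge h

lemma integral_gaussPdf {r : ℝ} (hr : 0 < r) : ∫ x, gaussPdf r x = 1 := by
  simpa using integral_mul_gaussPdf hr (fun _ => 1)

lemma integral_id_mul_gaussPdf {r : ℝ} (hr : 0 < r) : ∫ x, x * gaussPdf r x = 0 := by
  rw [integral_mul_gaussPdf hr, ProbabilityTheory.integral_id_gaussianReal]

lemma integral_sq_mul_gaussPdf {r : ℝ} (hr : 0 < r) : ∫ x, x ^ 2 * gaussPdf r x = r ^ 2 := by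
  rw [integral_mul_gaussPdf hr (fun x => x ^ 2)]
  have h := ProbabilityTheory.variance_id_gaussianReal (μ := 0) (v := (r ^ 2).toNNReal)
  rw [ProbabilityTheory.variance_of_integral_eq_zero aemeasurable_id
    (ProbabilityTheory.integral_id_gaussianReal (μ := 0))] at h
  rw [Real.coe_toNNReal _ (sq_nonneg r)] at h
  exact h

/-- The derivative of the Gaussian density. -/
def gaussDeriv (r x : ℝ) : ℝ := -(x / r ^ 2) * gaussPdf r x

lemma hasDerivAt_gaussPdf {r : ℝ} (hr : 0 < r) (x : ℝ) :
    HasDerivAt (gaussPdf r) (gaussDeriv r x) x := by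
  have h1 : HasDerivAt (fun x : ℝ => -(x ^ 2) / (2 * r ^ 2)) (-(2 * x) / (2 * r ^ 2)) x := by
    have := ((hasDerivAt_pow 2 x).neg).div_const (2 * r ^ 2)
    simpa using this
  have h2 := (h1.exp).div_const (Real.sqrt (2 * Real.pi * r ^ 2))
  refine h2.congr_deriv ?_
  unfold gaussDeriv gaussPdf
  field_simp

lemma continuous_gaussDeriv (r : ℝ) : Continuous (gaussDeriv r) := by
  unfold gaussDeriv
  have := continuous_gaussPdf r
  fun_prop

lemma gaussPdf_le {r : ℝ} (x : ℝ) : |gaussPdf r x| ≤ 1 / Real.sqrt (2 * Real.pi * r ^ 2) := by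
  unfold gaussPdf
  rw [abs_of_nonneg (by positivity)]
  gcongr
  rw [Real.exp_le_one_iff]
  exact div_nonpos_of_nonpos_of_nonneg (by nlinarith [sq_nonneg x]) (by positivity)

lemma gaussDeriv_le {r : ℝ} (hr : 0 < r) (x : ℝ) :
    |gaussDeriv r x| ≤ 1 / r / Real.sqrt (2 * Real.pi * r ^ 2) := by
  unfold gaussDeriv gaussPdf
  rw [← mul_div_assoc, abs_div, abs_of_nonneg (Real.sqrt_nonneg _)]
  gcongr
  rw [abs_mul, abs_neg, abs_div, abs_of_pos (Real.exp_pos _), abs_of_pos (by positivity : 0 < r ^ 2)]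
  have h1 : -(x ^ 2) / (2 * r ^ 2) = -(x ^ 2 / (2 * r ^ 2)) := by ring
  rw [h1, Real.exp_neg, ← div_eq_mul_inv, div_le_iff₀ (Real.exp_pos _)]
  -- `|x| / r ≤ 1 + x² / (2 r²) ≤ exp (x² / (2 r²))`
  have h2 := Real.add_one_le_exp (x ^ 2 / (2 * r ^ 2))
  have h3 : |x| / r ≤ x ^ 2 / (2 * r ^ 2) + 1 := by
    have : x ^ 2 / (2 * r ^ 2) = (|x| / r) ^ 2 / 2 := by
      rw [div_pow, sq_abs]; field_simp
    rw [this]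
    nlinarith [sq_nonneg (|x| / r - 1)]
  calc |x| / r ^ 2 = 1 / r * (|x| / r) := by field_simp
    _ ≤ _ := by gcongr; linarith

/-- Against a bounded continuous kernel, an integrable `f` has a convolution everywhere. -/
lemma integrable_mul_kernel {f k : ℝ → ℝ} (hf : Integrable f) (hk : Continuous k) {M : ℝ}
    (hM : ∀ x, |k x| ≤ M) (x : ℝ) : Integrable fun y => f y * k (x - y) :=
  hf.mul_bdd (c := M) (by fun_prop) (Filter.Eventually.of_forall fun y => hM _)

lemma integrable_mul_gaussPdf {f : ℝ → ℝ} (hf : Integrable f) (r x : ℝ) :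
    Integrable fun y => f y * gaussPdf r (x - y) :=
  integrable_mul_kernel hf (continuous_gaussPdf r) gaussPdf_le x

lemma integrable_mul_gaussDeriv {f : ℝ → ℝ} (hf : Integrable f) {r : ℝ} (hr : 0 < r) (x : ℝ) :
    Integrable fun y => f y * gaussDeriv r (x - y) :=
  integrable_mul_kernel hf (continuous_gaussDeriv r) (gaussDeriv_le hr) x

lemma hasDerivAt_smoothed {f : ℝ → ℝ} (hf : Integrable f) {r : ℝ} (hr : 0 < r) (x : ℝ) :
    HasDerivAt (fun t => smoothed f r t) (∫ y, f y * gaussDeriv r (x - y)) x := by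
  unfold smoothed
  refine (hasDerivAt_integral_of_dominated_loc_of_deriv_le (μ := volume) (s := Set.univ)
    (F := fun t y => f y * gaussPdf r (t - y)) (F' := fun t y => f y * gaussDeriv r (t - y))
    (bound := fun y => |f y| * (1 / r / Real.sqrt (2 * Real.pi * r ^ 2)))
    Filter.univ_mem ?_ (integrable_mul_gaussPdf hf r x)
    (integrable_mul_gaussDeriv hf hr x).aestronglyMeasurable ?_ (hf.abs.mul_const _) ?_).2
  · exact Filter.Eventually.of_forall fun t => (integrable_mul_gaussPdf hf r t).aestronglyMeasurable
  · refine Filter.Eventually.of_forall fun y t _ => ?_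
    rw [Real.norm_eq_abs, abs_mul]
    gcongr
    exact gaussDeriv_le hr _
  · refine Filter.Eventually.of_forall fun y t _ => ?_
    exact ((hasDerivAt_gaussPdf hr (t - y)).comp_sub_const t y).const_mul _

lemma smoothed_pos {f : ℝ → ℝ} (hf : IsDensity f) {r : ℝ} (hr : 0 < r) (x : ℝ) :
    0 < smoothed f r x := by
  obtain ⟨h0, hi, h1⟩ := hf
  have hn : ∀ y, 0 ≤ f y * gaussPdf r (x - y) := fun y =>
    mul_nonneg (h0 y) (gaussPdf_pos hr _).le
  refine lt_of_le_of_ne (integral_nonneg hn) fun h => ?_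
  have h2 := (integral_eq_zero_iff_of_nonneg hn (integrable_mul_gaussPdf hi r x)).1 h.symm
  have h3 : f =ᵐ[volume] 0 := by
    filter_upwards [h2] with y hy
    exact (mul_eq_zero.1 hy).resolve_right (gaussPdf_pos hr _).ne'
  rw [integral_congr_ae h3] at h1
  simp at h1

lemma integrable_conv {f k : ℝ → ℝ} (hf : Integrable f) (hk : Integrable k) :
    Integrable fun x => ∫ y, f y * k (x - y) :=
  hf.integrable_convolution (ContinuousLinearMap.mul ℝ ℝ) hk

lemma integral_conv {f k : ℝ → ℝ} (hf : Integrable f) (hk : Integrable k) :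
    ∫ x, ∫ y, f y * k (x - y) = (∫ x, f x) * ∫ x, k x :=
  integral_convolution (ContinuousLinearMap.mul ℝ ℝ) hf hk

lemma ae_integrable_conv {f k : ℝ → ℝ} (hf : Integrable f) (hk : Integrable k) :
    ∀ᵐ x, Integrable fun y => f y * k (x - y) :=
  hf.ae_convolution_exists (ContinuousLinearMap.mul ℝ ℝ) hk

/-- Convolution with a probability density does not increase `∫ k² / g`. -/
lemma conv_sq_div {f : ℝ → ℝ} (hf : IsDensity f) {r : ℝ} (hr : 0 < r) {k : ℝ → ℝ}
    (hk : Integrable k) (hk2 : Integrable fun x => k x ^ 2 / gaussPdf r x) :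
    Integrable (fun x => (∫ y, f y * k (x - y)) ^ 2 / smoothed f r x) ∧
    ∫ x, (∫ y, f y * k (x - y)) ^ 2 / smoothed f r x ≤ ∫ x, k x ^ 2 / gaussPdf r x := by
  have hfi := hf.2.1
  have hA := integrable_conv hfi hk2
  have hle : ∀ᵐ x, (∫ y, f y * k (x - y)) ^ 2 / smoothed f r x
      ≤ ∫ y, f y * (k (x - y) ^ 2 / gaussPdf r (x - y)) := by
    filter_upwards [ae_integrable_conv hfi hk, ae_integrable_conv hfi hk2] with x h1 h2
    rw [div_le_iff₀ (smoothed_pos hf hr x)]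
    have hg := fun y => (gaussPdf_pos hr (x - y)).ne'
    have e1 : ∀ y, f y * gaussPdf r (x - y) * (k (x - y) / gaussPdf r (x - y)) ^ 2
        = f y * (k (x - y) ^ 2 / gaussPdf r (x - y)) := fun y => by
      have := hg y
      field_simp
    have e2 : ∀ y, f y * gaussPdf r (x - y) * (k (x - y) / gaussPdf r (x - y) * 1)
        = f y * k (x - y) := fun y => by
      have := hg y
      field_simp
    have := (weighted_cs (w := fun y => f y * gaussPdf r (x - y))
      (a := fun y => k (x - y) / gaussPdf r (x - y)) (b := fun _ => 1)
      (fun y => mul_nonneg (hf.1 y) (gaussPdf_pos hr _).le)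
      (by simpa only [e1] using h2)
      (by simpa using integrable_mul_gaussPdf hfi r x)
      (by simpa only [e2] using h1.aestronglyMeasurable)).2
    simp only [e1, e2, one_pow] at this
    simp only [mul_one] at this
    exact this
  have hint : Integrable (fun x => (∫ y, f y * k (x - y)) ^ 2 / smoothed f r x) := by
    refine hA.mono' ?_ ?_
    · exact (((integrable_conv hfi hk).aestronglyMeasurable.aemeasurable.pow_const 2).div
        (integrable_conv hfi (integrable_gaussPdf hr)).aestronglyMeasurable.aemeasurable
        ).aestronglyMeasurable
    · filter_upwards [hle] with x hx
      rwa [Real.norm_of_nonneg (div_nonneg (sq_nonneg _) (smoothed_pos hf hr x).le)]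
  refine ⟨hint, (integral_mono_ae hint hA hle).trans_eq ?_⟩
  rw [integral_conv hfi hk2, hf.2.2, one_mul]

lemma integrable_gaussDeriv {r : ℝ} (hr : 0 < r) : Integrable (gaussDeriv r) := by
  refine ((integrable_pow_mul_gaussPdf hr 1).const_mul (-(1 / r ^ 2))).congr
    (Filter.Eventually.of_forall fun x => ?_)
  simp only [gaussDeriv]
  ring

lemma integral_gaussDeriv {r : ℝ} (hr : 0 < r) : ∫ x, gaussDeriv r x = 0 := by
  have : gaussDeriv r = fun x => -(1 / r ^ 2) * (x * gaussPdf r x) := by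
    ext x; simp only [gaussDeriv]; ring
  rw [this, integral_const_mul, integral_id_mul_gaussPdf hr, mul_zero]

lemma integrable_gaussDeriv_sq_div {r : ℝ} (hr : 0 < r) :
    Integrable fun x => gaussDeriv r x ^ 2 / gaussPdf r x := by
  refine ((integrable_pow_mul_gaussPdf hr 2).const_mul (1 / r ^ 4)).congr
    (Filter.Eventually.of_forall fun x => ?_)
  have := (gaussPdf_pos hr x).ne'
  simp only [gaussDeriv]
  field_simp

/-- The second-order Taylor remainder of `z ↦ gaussPdf r (z - ε)` in `ε`. -/
def remainder (r ε z : ℝ) : ℝ := gaussPdf r (z - ε) - gaussPdf r z + ε * gaussDeriv r z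

lemma integrable_remainder {r : ℝ} (hr : 0 < r) (ε : ℝ) : Integrable (remainder r ε) :=
  (((integrable_gaussPdf hr).comp_sub_right ε).sub (integrable_gaussPdf hr)).add
    ((integrable_gaussDeriv hr).const_mul ε)

/-- Completing the square: `g (z - ε)² / g z` is a multiple of the Gaussian centred at `2 ε`. -/
lemma gaussPdf_sub_sq {r : ℝ} (hr : 0 < r) (ε z : ℝ) :
    gaussPdf r (z - ε) ^ 2
      = Real.exp (ε ^ 2 / r ^ 2) * gaussPdf r (z - 2 * ε) * gaussPdf r z := by
  unfold gaussPdf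
  have h : Real.exp (-((z - ε) ^ 2) / (2 * r ^ 2)) ^ 2 = Real.exp (ε ^ 2 / r ^ 2)
      * Real.exp (-((z - 2 * ε) ^ 2) / (2 * r ^ 2)) * Real.exp (-(z ^ 2) / (2 * r ^ 2)) := by
    rw [← Real.exp_nat_mul, ← Real.exp_add, ← Real.exp_add]
    congr 1
    push_cast
    field_simp
    ring
  rw [div_pow, h]
  ring

/-- The chi-square size of the remainder. -/
lemma remainder_sq_div {r : ℝ} (hr : 0 < r) (ε : ℝ) :
    Integrable (fun z => remainder r ε z ^ 2 / gaussPdf r z) ∧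
    ∫ z, remainder r ε z ^ 2 / gaussPdf r z
      = Real.exp (ε ^ 2 / r ^ 2) - 1 - ε ^ 2 / r ^ 2 := by
  set E := Real.exp (ε ^ 2 / r ^ 2) with hE
  have e : (fun z => remainder r ε z ^ 2 / gaussPdf r z) = fun z =>
      E * gaussPdf r (z - 2 * ε) + gaussPdf r z + ε ^ 2 / r ^ 4 * (z ^ 2 * gaussPdf r z)
      + (-2 - 2 * ε ^ 2 / r ^ 2) * gaussPdf r (z - ε)
      + (-(2 * ε / r ^ 2)) * ((z - ε) * gaussPdf r (z - ε))
      + 2 * ε / r ^ 2 * (z * gaussPdf r z) := by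
    ext z
    have hg := (gaussPdf_pos hr z).ne'
    have h := gaussPdf_sub_sq hr ε z
    rw [← hE] at h
    simp only [remainder, gaussDeriv]
    generalize gaussPdf r (z - 2 * ε) = G at h ⊢
    rw [div_eq_iff hg]
    field_simp
    linear_combination r ^ 4 * h
  have i0 := integrable_gaussPdf hr
  have i1 : Integrable fun z => z * gaussPdf r z := by
    simpa using integrable_pow_mul_gaussPdf hr 1
  have j1 : Integrable fun z => E * gaussPdf r (z - 2 * ε) :=
    (i0.comp_sub_right (2 * ε)).const_mul E
  have j2 : Integrable fun z => ε ^ 2 / r ^ 4 * (z ^ 2 * gaussPdf r z) :=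
    (integrable_pow_mul_gaussPdf hr 2).const_mul _
  have j3 : Integrable fun z => (-2 - 2 * ε ^ 2 / r ^ 2) * gaussPdf r (z - ε) :=
    (i0.comp_sub_right ε).const_mul _
  have j4 : Integrable fun z => (-(2 * ε / r ^ 2)) * ((z - ε) * gaussPdf r (z - ε)) :=
    (i1.comp_sub_right ε).const_mul _
  have j5 : Integrable fun z => 2 * ε / r ^ 2 * (z * gaussPdf r z) := i1.const_mul _
  have k1 := j1.add i0
  have k2 := k1.add j2
  have k3 := k2.add j3
  have k4 := k3.add j4
  simp only [Pi.add_def] at k1 k2 k3 k4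
  rw [e]
  refine ⟨k4.add j5, ?_⟩
  rw [integral_add k4 j5, integral_add k3 j4, integral_add k2 j3, integral_add k1 j2,
    integral_add j1 i0]
  simp only [integral_const_mul]
  rw [integral_sub_right_eq_self (gaussPdf r), integral_sub_right_eq_self (gaussPdf r),
    integral_sub_right_eq_self (fun z => z * gaussPdf r z), integral_gaussPdf hr,
    integral_id_mul_gaussPdf hr, integral_sq_mul_gaussPdf hr]
  field_simp
  ring

lemma exp_sub_le_sq {u : ℝ} (h0 : 0 ≤ u) (h1 : u ≤ 1) : Real.exp u - 1 - u ≤ u ^ 2 := by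
  have := Real.abs_exp_sub_one_sub_id_le (x := u) (by rwa [abs_of_nonneg h0])
  exact (le_abs_self _).trans this

/-- There is a universal constant `C > 0` such that for `|ε| ≤ r/2`, the expected
off-center score satisfies `|E_{x~f_r}[s_r(x+ε)] + ε·I_r| ≤ C·√I_r·ε²/r²`. -/
theorem expected_offcenter_score_bound :
    ∃ C : ℝ, 0 < C ∧ ∀ (f : ℝ → ℝ) (r : ℝ), IsDensity f → 0 < r →
      ∀ ε : ℝ, |ε| ≤ r / 2 →
      |(∫ x, score f r (x + ε) * smoothed f r x) + ε * fisherInfo f r| ≤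
        C * Real.sqrt (fisherInfo f r) * ε ^ 2 / r ^ 2 := by
  refine ⟨1, one_pos, fun f r hf hr ε hε => ?_⟩
  have hfi := hf.2.1
  have hp := fun x => (smoothed_pos hf hr x).ne'
  set D : ℝ → ℝ := fun x => ∫ y, f y * gaussDeriv r (x - y) with hD
  set N : ℝ → ℝ := fun x => ∫ y, f y * remainder r ε (x - y) with hN
  have hs : ∀ x, score f r x = D x / smoothed f r x := fun x => by
    unfold score
    rw [(hasDerivAt_smoothed hfi hr x).deriv]
  have hNeq : ∀ x, N x = smoothed f r (x - ε) - smoothed f r x + ε * D x := fun x => by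
    have i1 := integrable_mul_gaussPdf hfi r (x - ε)
    have i2 := integrable_mul_gaussPdf hfi r x
    have i3 := (integrable_mul_gaussDeriv hfi hr x).const_mul ε
    simp only [hN, hD, smoothed]
    have i4 := i1.sub i2
    simp only [Pi.sub_def] at i4
    rw [← integral_const_mul, ← integral_sub i1 i2, ← integral_add i4 i3]
    congr 1
    ext y
    simp only [remainder, sub_right_comm x y ε]
    ring
  have iD : Integrable D := integrable_conv hfi (integrable_gaussDeriv hr)
  have iN : Integrable N := integrable_conv hfi (integrable_remainder hr ε)
  have ip : Integrable (smoothed f r) := integrable_conv hfi (integrable_gaussPdf hr)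
  have intD : ∫ x, D x = 0 := by
    rw [hD, integral_conv hfi (integrable_gaussDeriv hr), integral_gaussDeriv hr, mul_zero]
  have qD := (conv_sq_div hf hr (integrable_gaussDeriv hr) (integrable_gaussDeriv_sq_div hr)).1
  have qN := conv_sq_div hf hr (integrable_remainder hr ε) (remainder_sq_div hr ε).1
  rw [(remainder_sq_div hr ε).2] at qN
  have e1 : ∀ x, smoothed f r x * (D x / smoothed f r x) ^ 2 = D x ^ 2 / smoothed f r x :=
    fun x => by have := hp x; field_simp
  have e2 : ∀ x, smoothed f r x * (N x / smoothed f r x) ^ 2 = N x ^ 2 / smoothed f r x :=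
    fun x => by have := hp x; field_simp
  obtain ⟨iDN, hcs⟩ := weighted_cs (w := smoothed f r) (a := fun x => D x / smoothed f r x)
    (b := fun x => N x / smoothed f r x) (fun x => (smoothed_pos hf hr x).le)
    (by simpa only [e1] using qD) (by simpa only [e2] using qN.1)
    (by
      have m1 := iD.aestronglyMeasurable.aemeasurable
      have m2 := iN.aestronglyMeasurable.aemeasurable
      have m3 := ip.aestronglyMeasurable.aemeasurable
      exact (m3.mul ((m1.div m3).mul (m2.div m3))).aestronglyMeasurable)
  have hI : fisherInfo f r = ∫ x, D x ^ 2 / smoothed f r x := by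
    unfold fisherInfo
    congr 1; ext x
    rw [hs, ← e1, mul_comm]
  simp only [e1, e2] at hcs
  rw [← hI] at hcs
  have hmain : (∫ x, score f r (x + ε) * smoothed f r x) + ε * fisherInfo f r
      = ∫ x, smoothed f r x * (D x / smoothed f r x * (N x / smoothed f r x)) := by
    have t : ∫ x, score f r (x + ε) * smoothed f r x
        = ∫ x, score f r x * smoothed f r (x - ε) := by
      rw [← integral_sub_right_eq_self (fun x => score f r (x + ε) * smoothed f r x) ε]
      simp
    have t2 : ∀ x, score f r x * smoothed f r (x - ε)
        = smoothed f r x * (D x / smoothed f r x * (N x / smoothed f r x)) + D x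
          - ε * (D x ^ 2 / smoothed f r x) := fun x => by
      rw [hs, hNeq]
      have := hp x
      field_simp
      ring
    rw [t]
    simp only [t2]
    have i3 : Integrable fun x => ε * (D x ^ 2 / smoothed f r x) := qD.const_mul ε
    have i4 := iDN.add iD
    simp only [Pi.add_def] at i4
    rw [integral_sub i4 i3, integral_add iDN iD, intD, integral_const_mul, ← hI]
    ring
  rw [hmain]
  have hI0 : 0 ≤ fisherInfo f r := by
    rw [hI]
    exact integral_nonneg fun x => div_nonneg (sq_nonneg _) (smoothed_pos hf hr x).le
  have hu1 : ε ^ 2 / r ^ 2 ≤ 1 := by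
    rw [div_le_one (by positivity), ← sq_abs ε]
    exact pow_le_pow_left₀ (abs_nonneg _) (by linarith) 2
  have hb : ∫ x, N x ^ 2 / smoothed f r x ≤ (ε ^ 2 / r ^ 2) ^ 2 :=
    qN.2.trans (exp_sub_le_sq (by positivity) hu1)
  rw [one_mul, mul_div_assoc]
  refine abs_le_of_sq_le_sq ?_ (by positivity)
  rw [mul_pow, Real.sq_sqrt hI0]
  exact hcs.trans (mul_le_mul_of_nonneg_left hb hI0)

end
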